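/- arXiv:1410.6697 — 2 statements merged into one kernel-verified Lean document; each statement's English description precedes it below -/
import Mathlib

section
/- Let b ≥ 2 be an integer and A ∈ {1, 2, …, b−1}. Let (e_n)_{n≥1} and (f_n)_{n≥1} be strictly increasing sequences of positive integers with e₁ < f₁ < e₂ < f₂ < ⋯, with ω := liminf_{n→∞} e_{n+1}/f_n > 2, and with f_n − e_n = O(n) as n → ∞. Let I_n = {e_n, e_n+1, …, f_n} and I = ⋃_{n≥1} I_n, and let (a_n)_{n≥1} be a strictly increasing sequence of integers such that every a_n ∈ I and both (e_n)_{n≥1} and (f_n)_{n≥1} occur as subsequences of (a_n)_{n≥1}. Put ζ = Σ_{n≥1} A·b^{−a_n}, and for each n let m = m(n) be the index with f_n = a_m; define x_n := b^{f_n} and y_n := Σ_{j≤m} A·b^{f_n − a_j} = ⌊ζ·x_n⌋. Then for every ε > 0: (i) for all sufficiently large n, ‖ζ·x_n‖ = |ζ·x_n − y_n| < x_n^{−ω+1+ε}; and (ii) for every pair (x, y) ∈ ℕ × ℤ with x sufficiently large (depending on ε), the inequality |ζ·x − y| ≤ x^{−ω/(ω−1)−ε} implies that (x, y) is linearly dependent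 on some (x_n, y_n). -/
/-!
Truncating the series `ζ = ∑ dⱼ b ^ (-aⱼ)` after the digits up to position `fₙ` gives integers
`yₙ` with `|ζ b ^ fₙ - yₙ| = O(b ^ (fₙ - eₙ₊₁))`, because the digits between `fₙ` and `eₙ₊₁`
vanish. Since `eₙ₊₁ ≥ (ω - o(1)) fₙ`, this is (i).

For (ii), put `xₙ = b ^ fₙ` and let `x` be large. Choose `n` so that `b ^ (eₙ₊₁ - fₙ)` is at most a
constant times `x`, while `b ^ (eₙ₊₂ - fₙ₊₁)` is not. The second condition makes
`x |ζ xₙ₊₁ - yₙ₊₁| < 1 / 2`. Since `fₙ₊₁ ~ eₙ₊₁`, the first one gives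
`xₙ₊₁ ≤ x ^ (ω / (ω - 1) + o(1))`, so `xₙ₊₁ |ζ x - y| < 1 / 2` as well. The integer
`x yₙ₊₁ - xₙ₊₁ y = xₙ₊₁ (ζ x - y) - x (ζ xₙ₊₁ - yₙ₊₁)` is then smaller than `1` in absolute value.
-/

open Filter Set

/-- `distNearestInt x` is the distance from `x` to the nearest integer. -/
noncomputable def distNearestInt (x : ℝ) : ℝ := |x - (round x : ℤ)|

open Asymptotics
open scoped Topology

section DigitSeries

variable {b : ℝ} {c : ℕ → ℝ} {D : ℝ} {a : ℕ → ℕ}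

lemma abs_div_pow_le_geometric (hb : 1 < b) (hc : ∀ j, |c j| ≤ D) (ha : StrictMono a) (j : ℕ) :
    |c j / b ^ a j| ≤ D / b ^ a 0 * b⁻¹ ^ j := by
  have hb0 : 0 < b := one_pos.trans hb
  have hD : 0 ≤ D := (abs_nonneg _).trans (hc 0)
  have hpow : b ^ (j + a 0) ≤ b ^ a j := pow_le_pow_right₀ hb.le (ha.add_le_nat j 0)
  calc |c j / b ^ a j| = |c j| / b ^ a j := by rw [abs_div, abs_of_pos (pow_pos hb0 _)]
    _ ≤ D / b ^ (j + a 0) := by gcongr; exact hc j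
    _ = D / b ^ a 0 * b⁻¹ ^ j := by rw [pow_add, inv_pow]; field_simp

lemma hasSum_const_mul_inv_pow (hb : 1 < b) (C : ℝ) :
    HasSum (fun j : ℕ ↦ C * b⁻¹ ^ j) (C * (1 - b⁻¹)⁻¹) :=
  (hasSum_geometric_of_lt_one (inv_nonneg.2 (one_pos.trans hb).le)
    (inv_lt_one_of_one_lt₀ hb)).mul_left C

lemma summable_div_pow (hb : 1 < b) (hc : ∀ j, |c j| ≤ D) (ha : StrictMono a) :
    Summable fun j ↦ c j / b ^ a j :=
  (hasSum_const_mul_inv_pow hb _).summable.of_norm_bounded (abs_div_pow_le_geometric hb hc ha)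

lemma abs_tsum_div_pow_le (hb : 1 < b) (hc : ∀ j, |c j| ≤ D) (ha : StrictMono a) :
    |∑' j, c j / b ^ a j| ≤ D / b ^ a 0 * (1 - b⁻¹)⁻¹ :=
  tsum_of_norm_bounded (E := ℝ) (hasSum_const_mul_inv_pow hb _) (abs_div_pow_le_geometric hb hc ha)

lemma sum_div_pow_mul_pow (hb : b ≠ 0) {k F : ℕ} (hle : ∀ j < k, a j ≤ F) :
    (∑ j ∈ Finset.range k, c j / b ^ a j) * b ^ F = ∑ j ∈ Finset.range k, c j * b ^ (F - a j) := by
  rw [Finset.sum_mul]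
  refine Finset.sum_congr rfl fun j hj ↦ ?_
  rw [pow_sub₀ b hb (hle j (Finset.mem_range.1 hj))]
  field_simp

lemma abs_tsum_mul_pow_sub_sum_le (hb : 1 < b) (hc : ∀ j, |c j| ≤ D) (ha : StrictMono a)
    {k F : ℕ} (hle : ∀ j < k, a j ≤ F) (hF : F ≤ a k) :
    |(∑' j, c j / b ^ a j) * b ^ F - ∑ j ∈ Finset.range k, c j * b ^ (F - a j)| ≤
      D * (1 - b⁻¹)⁻¹ / b ^ (a k - F) := by
  have hb0 : 0 < b := one_pos.trans hb
  have tail_le : |∑' j, c (j + k) / b ^ a (j + k)| ≤ D / b ^ a k * (1 - b⁻¹)⁻¹ := by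
    simpa only [zero_add] using abs_tsum_div_pow_le hb (fun j ↦ hc (j + k))
      (a := fun j ↦ a (j + k)) fun i j hij ↦ ha (Nat.add_lt_add_right hij k)
  calc |(∑' j, c j / b ^ a j) * b ^ F - ∑ j ∈ Finset.range k, c j * b ^ (F - a j)|
      = |∑' j, c (j + k) / b ^ a (j + k)| * b ^ F := by
        rw [← sum_div_pow_mul_pow hb0.ne' hle, ← (summable_div_pow hb hc ha).sum_add_tsum_nat_add k,
          add_mul, add_sub_cancel_left, abs_mul, abs_of_pos (pow_pos hb0 F)]
    _ ≤ D / b ^ a k * (1 - b⁻¹)⁻¹ * b ^ F := by gcongr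
    _ = D * (1 - b⁻¹)⁻¹ / b ^ (a k - F) := by rw [pow_sub₀ b hb0.ne' hF]; field_simp

end DigitSeries

section Approximation

lemma distNearestInt_eq_abs_sub {x : ℝ} {m : ℤ} (h : |x - m| < 1 / 2) :
    distNearestInt x = |x - m| := by
  obtain ⟨hl, hu⟩ := abs_lt.1 h
  have : round x = m := round_eq_iff.2 ⟨by linarith, by linarith⟩
  rw [distNearestInt, this]

lemma isLittleO_rpow_rpow_of_lt {s t : ℝ} (hst : s < t) :
    (fun x : ℝ ↦ x ^ s) =o[atTop] fun x ↦ x ^ t := by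
  refine isLittleO_of_tendsto' ?_ ?_
  · filter_upwards [eventually_gt_atTop 0] with x hx h0
    exact absurd h0 (Real.rpow_pos_of_pos hx t).ne'
  · refine (tendsto_rpow_neg_atTop (sub_pos.2 hst)).congr' ?_
    filter_upwards [eventually_gt_atTop 0] with x hx
    rw [neg_sub, Real.rpow_sub hx]

lemma eventually_abs_lt_rpow_neg {u q Q : ℕ → ℝ} {σ τ : ℝ} (hq : Tendsto q atTop atTop)
    (hu : u =O[atTop] fun n ↦ (Q n)⁻¹) (hqQ : ∀ᶠ n in atTop, q n ^ τ ≤ Q n) (hστ : σ < τ) :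
    ∀ᶠ n in atTop, |u n| < q n ^ (-σ) := by
  have hq0 : ∀ᶠ n in atTop, 0 < q n := hq.eventually_gt_atTop 0
  have inv_le : (fun n ↦ (Q n)⁻¹) =O[atTop] fun n ↦ q n ^ (-τ) := by
    refine IsBigO.of_norm_eventuallyLE ?_
    filter_upwards [hqQ, hq0] with n hn hn0
    have hpos : 0 < q n ^ τ := Real.rpow_pos_of_pos hn0 τ
    rw [Real.norm_of_nonneg (inv_nonneg.2 (hpos.le.trans hn)), Real.rpow_neg hn0.le]
    gcongr
  have hlittle : u =o[atTop] fun n ↦ q n ^ (-σ) :=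
    (hu.trans inv_le).trans_isLittleO
      ((isLittleO_rpow_rpow_of_lt (neg_lt_neg hστ)).comp_tendsto hq)
  filter_upwards [hlittle.bound one_half_pos, hq0] with n hn hn0
  have hpos : 0 < q n ^ (-σ) := Real.rpow_pos_of_pos hn0 (-σ)
  rw [Real.norm_eq_abs, Real.norm_of_nonneg hpos.le] at hn
  linarith

lemma mul_sub_mul_eq_zero_of_lt_one {ζ : ℝ} {x q : ℕ} {y p : ℤ}
    (h : x * |ζ * q - p| + q * |ζ * x - y| < 1) : (x : ℤ) * p - q * y = 0 := by
  have habs : |(x : ℝ) * p - q * y| < 1 := by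
    calc |(x : ℝ) * p - q * y| = |q * (ζ * x - y) - x * (ζ * q - p)| := by congr 1; ring
      _ ≤ |q * (ζ * x - y)| + |x * (ζ * q - p)| := abs_sub _ _
      _ = x * |ζ * q - p| + q * |ζ * x - y| := by
        rw [abs_mul, abs_mul, Nat.abs_cast, Nat.abs_cast, add_comm]
      _ < 1 := h
  exact Int.abs_lt_one_iff.1 (by exact_mod_cast habs)

lemma exists_ge_le_and_lt_succ {Q : ℕ → ℝ} (hQ : Tendsto Q atTop atTop) {N : ℕ} {z : ℝ}
    (hz : Q N ≤ z) : ∃ n ≥ N, Q n ≤ z ∧ z < Q (n + 1) := by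
  have hex : ∃ k, z < Q (k + N) :=
    (((tendsto_add_atTop_iff_nat N).2 hQ).eventually_gt_atTop z).exists
  obtain ⟨k, hk, hk'⟩ :=
    Nat.exists_not_and_succ_of_not_zero_of_exists (by simpa only [zero_add, not_lt] using hz) hex
  exact ⟨k + N, Nat.le_add_left N k, not_lt.1 hk, by rwa [Nat.add_right_comm]⟩

theorem eventually_exists_mul_sub_mul_eq_zero {ζ s t : ℝ} {q : ℕ → ℕ} {p : ℕ → ℤ} {Q : ℕ → ℝ}
    (hQ : Tendsto Q atTop atTop)
    (happrox : (fun n ↦ ζ * q n - p n) =O[atTop] fun n ↦ (Q n)⁻¹)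
    (hqQ : ∀ᶠ n in atTop, (q (n + 1) : ℝ) ≤ Q n ^ s) (hs : 0 ≤ s) (hst : s < t) :
    ∀ᶠ x : ℕ in atTop, ∀ y : ℤ, |ζ * x - y| ≤ (x : ℝ) ^ (-t) →
      ∃ n, (x : ℤ) * p n - q n * y = 0 := by
  obtain ⟨K, hK, hKbound⟩ := happrox.exists_pos
  obtain ⟨N, hN⟩ := eventually_atTop.1
    ((hKbound.bound.and hqQ).and (hQ.eventually_gt_atTop 0))
  have hsmall : Tendsto (fun x : ℕ ↦ (2 * K) ^ s * (x : ℝ) ^ (-(t - s))) atTop (𝓝 0) := by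
    simpa only [mul_zero, Function.comp_apply] using ((tendsto_rpow_neg_atTop (sub_pos.2 hst)).comp
      tendsto_natCast_atTop_atTop).const_mul ((2 * K) ^ s)
  have hlarge : Tendsto (fun x : ℕ ↦ 2 * K * (x : ℝ)) atTop atTop :=
    tendsto_natCast_atTop_atTop.const_mul_atTop (by positivity)
  filter_upwards [hsmall.eventually_lt_const one_half_pos, hlarge.eventually_ge_atTop (Q N),
    eventually_gt_atTop 0] with x hx_small hx_large hx y hy
  obtain ⟨n, hnN, hQ_le, hlt_Q⟩ := exists_ge_le_and_lt_succ hQ hx_large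
  obtain ⟨⟨-, hq_le⟩, hQn⟩ := hN n hnN
  obtain ⟨⟨hK_le, -⟩, hQn1⟩ := hN (n + 1) (hnN.trans n.le_succ)
  have hx0 : (0 : ℝ) < x := Nat.cast_pos.2 hx
  have approx_lt : x * |ζ * q (n + 1) - p (n + 1)| < 1 / 2 := by
    calc x * |ζ * q (n + 1) - p (n + 1)| ≤ x * (K * (Q (n + 1))⁻¹) := by
          rw [Real.norm_eq_abs, norm_inv, Real.norm_of_nonneg hQn1.le] at hK_le
          gcongr
      _ = x * K / Q (n + 1) := by rw [← mul_assoc, div_eq_mul_inv]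
      _ < 1 / 2 := by rw [div_lt_iff₀ hQn1]; linarith
  have dist_lt : q (n + 1) * |ζ * x - y| < 1 / 2 := by
    calc q (n + 1) * |ζ * x - y| ≤ (2 * K * x) ^ s * (x : ℝ) ^ (-t) := by
          gcongr
          exact hq_le.trans (Real.rpow_le_rpow hQn.le hQ_le hs)
      _ = (2 * K) ^ s * (x : ℝ) ^ (-(t - s)) := by
          rw [Real.mul_rpow (by positivity) hx0.le, mul_assoc, ← Real.rpow_add hx0]
          congr 2
          ring
      _ < 1 / 2 := hx_small
  exact ⟨n + 1, mul_sub_mul_eq_zero_of_lt_one (by linarith)⟩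

end Approximation

section Blocks

variable {e f : ℕ → ℕ} {ω : ℝ}

lemma strictMono_right_endpoint (hef : ∀ n, e n ≤ f n ∧ f n < e (n + 1)) : StrictMono f :=
  strictMono_nat_of_lt_succ fun n ↦ (hef n).2.trans_le (hef (n + 1)).1

lemma strictMono_left_endpoint (hef : ∀ n, e n ≤ f n ∧ f n < e (n + 1)) : StrictMono e :=
  strictMono_nat_of_lt_succ fun n ↦ (hef n).1.trans_lt (hef n).2

lemma left_endpoint_succ_le (hef : ∀ n, e n ≤ f n ∧ f n < e (n + 1)) {i n : ℕ}
    (hi : ∃ m, e m ≤ i ∧ i ≤ f m) (hlt : f n < i) : e (n + 1) ≤ i := by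
  obtain ⟨m, hem, hfm⟩ := hi
  have hnm : n < m := (strictMono_right_endpoint hef).lt_iff_lt.1 (hlt.trans_le hfm)
  exact ((strictMono_left_endpoint hef).monotone hnm).trans hem

lemma eventually_mul_le_left_endpoint_succ {c : ℝ}
    (hc : c < liminf (fun n : ℕ ↦ (e (n + 1) : ℝ) / (f n : ℝ)) atTop) :
    ∀ᶠ n in atTop, c * f n ≤ e (n + 1) := by
  have hbdd : IsBoundedUnder (· ≥ ·) atTop fun n : ℕ ↦ (e (n + 1) : ℝ) / (f n : ℝ) :=
    isBoundedUnder_of ⟨0, fun n ↦ by positivity⟩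
  filter_upwards [eventually_lt_of_lt_liminf hc hbdd] with n hn
  exact mul_le_of_le_div₀ (Nat.cast_nonneg _) (Nat.cast_nonneg _) hn.le

lemma tendsto_gap_atTop (hf : StrictMono f) {c : ℝ} (hc : 1 < c)
    (hgap : ∀ᶠ n in atTop, c * f n ≤ e (n + 1)) :
    Tendsto (fun n ↦ e (n + 1) - f n) atTop atTop := by
  have hlim : Tendsto (fun n ↦ (c - 1) * (f n : ℝ)) atTop atTop :=
    (tendsto_natCast_atTop_atTop.comp hf.tendsto_atTop).const_mul_atTop (sub_pos.2 hc)
  refine tendsto_natCast_atTop_iff.1 (tendsto_atTop_mono' atTop ?_ hlim)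
  filter_upwards [hgap] with n hn
  have : (e (n + 1) : ℝ) ≤ ((e (n + 1) - f n : ℕ) : ℝ) + f n := by
    exact_mod_cast le_tsub_add
  linarith

lemma eventually_le_mul_gap (hω : 1 < ω) (hgap : ∀ c < ω, ∀ᶠ n in atTop, c * f n ≤ e (n + 1))
    (hequiv : (fun n ↦ (f n : ℝ)) ~[atTop] fun n ↦ (e n : ℝ)) {s : ℝ} (hs : ω / (ω - 1) < s) :
    ∀ᶠ n in atTop, (f (n + 1) : ℝ) ≤ s * (e (n + 1) - f n) := by
  rw [div_lt_iff₀ (sub_pos.2 hω)] at hs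
  have hs1 : 1 < s := by nlinarith
  obtain ⟨c, hc, hcω⟩ : ∃ c, s / (s - 1) < c ∧ c < ω :=
    exists_between ((div_lt_iff₀ (sub_pos.2 hs1)).2 (by linarith))
  have hc1 : 1 < c := ((one_lt_div (sub_pos.2 hs1)).2 (by linarith)).trans hc
  have hc0 : 0 < c := one_pos.trans hc1
  have slack_pos : 0 < s * (1 - 1 / c) - 1 := by
    rw [div_lt_iff₀ (sub_pos.2 hs1)] at hc
    have : s * (1 - 1 / c) - 1 = (c * (s - 1) - s) / c := by field_simp; ring
    rw [this]
    exact div_pos (by linarith) hc0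
  filter_upwards [hgap c hcω, (tendsto_add_atTop_nat 1).eventually (hequiv.bound slack_pos)]
    with n hgap_n hequiv_n
  rw [Pi.sub_apply, Real.norm_eq_abs, Real.norm_natCast] at hequiv_n
  have hf_le : (f n : ℝ) ≤ e (n + 1) / c := (le_div_iff₀' hc0).2 hgap_n
  calc (f (n + 1) : ℝ) ≤ e (n + 1) + (s * (1 - 1 / c) - 1) * e (n + 1) := by
        linarith [le_abs_self ((f (n + 1) : ℝ) - e (n + 1))]
    _ = s * (e (n + 1) - e (n + 1) / c) := by ring
    _ ≤ s * (e (n + 1) - f n) := by gcongr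

lemma isLittleO_natCast_of_mul_le_succ {u : ℕ → ℝ} (hu : ∀ᶠ n in atTop, 0 < u n) {c : ℝ}
    (hc : 1 < c) (hmul : ∀ᶠ n in atTop, c * u n ≤ u (n + 1)) :
    (fun n : ℕ ↦ (n : ℝ)) =o[atTop] u := by
  obtain ⟨N, hN⟩ := eventually_atTop.1 (hu.and hmul)
  have hc0 : 0 < c := one_pos.trans hc
  have huN : 0 < u N := (hN N le_rfl).1
  refine (isLittleO_coe_const_pow_of_one_lt hc).trans_isBigO (IsBigO.of_bound (c ^ N / u N) ?_)
  filter_upwards [eventually_ge_atTop N] with n hn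
  obtain ⟨k, rfl⟩ := Nat.exists_eq_add_of_le hn
  have hgrowth : c ^ k * u N ≤ u (N + k) :=
    geom_le (u := fun j ↦ u (N + j)) hc0.le k fun j _ ↦ (hN (N + j) (Nat.le_add_right N j)).2
  calc ‖c ^ (N + k)‖ = c ^ N / u N * (c ^ k * u N) := by
        rw [Real.norm_of_nonneg (by positivity), pow_add]; field_simp
    _ ≤ c ^ N / u N * ‖u (N + k)‖ := by
        gcongr; exact hgrowth.trans (Real.le_norm_self _)

lemma isEquivalent_endpoints (hef : ∀ n, e n ≤ f n ∧ f n < e (n + 1))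
    (hω : 1 < liminf (fun n : ℕ ↦ (e (n + 1) : ℝ) / (f n : ℝ)) atTop) {C : ℝ}
    (hlength : ∀ n : ℕ, (f n : ℝ) - e n ≤ C * (n + 1)) :
    (fun n ↦ (f n : ℝ)) ~[atTop] fun n ↦ (e n : ℝ) := by
  obtain ⟨c, hc, hcω⟩ := exists_between hω
  have he_pos : ∀ᶠ n in atTop, (0 : ℝ) < e n := by
    filter_upwards [(strictMono_left_endpoint hef).tendsto_atTop.eventually_gt_atTop 0] with n hn
    exact Nat.cast_pos.2 hn
  have he_growth : ∀ᶠ n in atTop, c * (e n : ℝ) ≤ e (n + 1) := by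
    filter_upwards [eventually_mul_le_left_endpoint_succ hcω] with n hn
    exact (mul_le_mul_of_nonneg_left (Nat.cast_le.2 (hef n).1) (by linarith)).trans hn
  have hlinear : (fun n ↦ (f n : ℝ) - e n) =O[atTop] fun n : ℕ ↦ (n : ℝ) := by
    refine IsBigO.of_bound (|C| * 2) ?_
    filter_upwards [eventually_ge_atTop 1] with n hn
    have hn1 : (1 : ℝ) ≤ n := Nat.one_le_cast.2 hn
    rw [Real.norm_of_nonneg (sub_nonneg.2 (Nat.cast_le.2 (hef n).1)), Real.norm_natCast]
    calc (f n : ℝ) - e n ≤ C * (n + 1) := hlength n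
      _ ≤ |C| * (n + n) := by gcongr; exact le_abs_self C
      _ = |C| * 2 * n := by ring
  exact hlinear.trans_isLittleO (isLittleO_natCast_of_mul_le_succ he_pos hc he_growth)

end Blocks

section BlockExpansion

variable {b : ℕ} {e f : ℕ → ℕ} {ω : ℝ}

lemma isBigO_truncation_error (hb : 1 < b) {d : ℕ → ℤ} {D : ℤ} (hd : ∀ j, |d j| ≤ D)
    (hef : ∀ n, e n ≤ f n ∧ f n < e (n + 1)) {a : ℕ → ℕ} (ha : StrictMono a)
    (haI : ∀ n, ∃ m, e m ≤ a n ∧ a n ≤ f m) {ψ : ℕ → ℕ} (hψf : ∀ n, a (ψ n) = f n) :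
    (fun n ↦ (∑' j, (d j : ℝ) / (b : ℝ) ^ a j) * ((b ^ f n : ℕ) : ℝ) -
        ((∑ j ∈ Finset.range (ψ n + 1), d j * (b : ℤ) ^ (f n - a j) : ℤ) : ℝ))
      =O[atTop] fun n ↦ ((b : ℝ) ^ (e (n + 1) - f n))⁻¹ := by
  have hb1 : (1 : ℝ) < b := Nat.one_lt_cast.2 hb
  have hd' : ∀ j, |(d j : ℝ)| ≤ D := fun j ↦ by exact_mod_cast hd j
  have hD : (0 : ℝ) ≤ D := (abs_nonneg _).trans (hd' 0)
  have hK : (0 : ℝ) ≤ D * (1 - (b : ℝ)⁻¹)⁻¹ :=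
    mul_nonneg hD (inv_nonneg.2 (sub_nonneg.2 (inv_le_one_of_one_le₀ hb1.le)))
  refine IsBigO.of_bound (D * (1 - (b : ℝ)⁻¹)⁻¹) (Eventually.of_forall fun n ↦ ?_)
  have hlt : f n < a (ψ n + 1) := hψf n ▸ ha (Nat.lt_succ_self _)
  have hle : ∀ j < ψ n + 1, a j ≤ f n := fun j hj ↦
    hψf n ▸ ha.monotone (Nat.le_of_lt_succ hj)
  have hnext : e (n + 1) ≤ a (ψ n + 1) := left_endpoint_succ_le hef (haI _) hlt
  rw [Real.norm_of_nonneg (by positivity : (0 : ℝ) ≤ ((b : ℝ) ^ (e (n + 1) - f n))⁻¹),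
    Real.norm_eq_abs, ← div_eq_mul_inv]
  push_cast
  refine (abs_tsum_mul_pow_sub_sum_le hb1 hd' ha hle hlt.le).trans ?_
  gcongr
  exact hb1.le

lemma eventually_pow_rpow_le_pow_gap (hb : 1 < b)
    (hgap : ∀ c < ω, ∀ᶠ n in atTop, c * f n ≤ e (n + 1)) {τ : ℝ} (hτ : τ < ω - 1) :
    ∀ᶠ n in atTop, ((b : ℝ) ^ f n) ^ τ ≤ (b : ℝ) ^ (e (n + 1) - f n) := by
  filter_upwards [hgap (τ + 1) (by linarith)] with n hn
  have hsub : (e (n + 1) : ℝ) ≤ ((e (n + 1) - f n : ℕ) : ℝ) + f n := by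
    exact_mod_cast le_tsub_add
  rw [← Real.rpow_natCast_mul b.cast_nonneg, ← Real.rpow_natCast _ (_ - _)]
  exact Real.rpow_le_rpow_of_exponent_le (Nat.one_le_cast.2 hb.le) (by linarith)

lemma eventually_pow_succ_le_pow_gap_rpow (hb : 1 < b)
    (hef : ∀ n, e n ≤ f n ∧ f n < e (n + 1)) (hω : 1 < ω)
    (hgap : ∀ c < ω, ∀ᶠ n in atTop, c * f n ≤ e (n + 1))
    (hequiv : (fun n ↦ (f n : ℝ)) ~[atTop] fun n ↦ (e n : ℝ)) {s : ℝ} (hs : ω / (ω - 1) < s) :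
    ∀ᶠ n in atTop, (b : ℝ) ^ f (n + 1) ≤ ((b : ℝ) ^ (e (n + 1) - f n)) ^ s := by
  filter_upwards [eventually_le_mul_gap hω hgap hequiv hs] with n hn
  rw [← Real.rpow_natCast_mul b.cast_nonneg, ← Real.rpow_natCast, Nat.cast_sub (hef n).2.le,
    mul_comm]
  exact Real.rpow_le_rpow_of_exponent_le (Nat.one_le_cast.2 hb.le) hn

end BlockExpansion

theorem block_lacunary_approximations_general {b : ℕ} (hb : 1 < b) {d : ℕ → ℤ} {D : ℤ}
    (hd : ∀ j, |d j| ≤ D) {e f : ℕ → ℕ} (hef : ∀ n, e n ≤ f n ∧ f n < e (n + 1)) {ω : ℝ}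
    (hω : ω = liminf (fun n : ℕ ↦ (e (n + 1) : ℝ) / (f n : ℝ)) atTop) (hω1 : 1 < ω)
    (hequiv : (fun n ↦ (f n : ℝ)) ~[atTop] fun n ↦ (e n : ℝ))
    {a : ℕ → ℕ} (ha : StrictMono a) (haI : ∀ n, ∃ m, e m ≤ a n ∧ a n ≤ f m)
    {ψ : ℕ → ℕ} (hψf : ∀ n, a (ψ n) = f n)
    {ζ : ℝ} (hζ : ζ = ∑' n : ℕ, (d n : ℝ) / (b : ℝ) ^ (a n))
    {y : ℕ → ℤ} (hy : ∀ n, y n = ∑ j ∈ Finset.range (ψ n + 1), d j * (b : ℤ) ^ (f n - a j))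
    {ε : ℝ} (hε : 0 < ε) :
    (∀ᶠ n in atTop,
      distNearestInt (ζ * (b : ℝ) ^ (f n)) = |ζ * (b : ℝ) ^ (f n) - (y n : ℝ)| ∧
      |ζ * (b : ℝ) ^ (f n) - (y n : ℝ)| < ((b : ℝ) ^ (f n)) ^ (-ω + 1 + ε)) ∧
    (∀ᶠ x : ℕ in atTop, ∀ yy : ℤ,
      |ζ * (x : ℝ) - (yy : ℝ)| ≤ (x : ℝ) ^ (-ω / (ω - 1) - ε) →
      ∃ n : ℕ, (x : ℤ) * y n - (b : ℤ) ^ (f n) * yy = 0) := by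
  have hb1 : (1 : ℝ) < b := Nat.one_lt_cast.2 hb
  have hf : StrictMono f := strictMono_right_endpoint hef
  have hgap : ∀ c < ω, ∀ᶠ n in atTop, c * f n ≤ e (n + 1) := fun c hc ↦
    eventually_mul_le_left_endpoint_succ (hω ▸ hc)
  have herror := isBigO_truncation_error hb hd hef ha haI hψf
  simp only [← hζ, ← hy] at herror
  have hpow : Tendsto (fun n ↦ (b : ℝ) ^ n) atTop atTop := tendsto_pow_atTop_atTop_of_one_lt hb1
  have hf_pow : Tendsto (fun n ↦ (b : ℝ) ^ f n) atTop atTop := hpow.comp hf.tendsto_atTop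
  obtain ⟨c, hc1, hcω⟩ := exists_between hω1
  have hgap_pow : Tendsto (fun n ↦ (b : ℝ) ^ (e (n + 1) - f n)) atTop atTop :=
    hpow.comp (tendsto_gap_atTop hf hc1 (hgap c hcω))
  have hκ : 0 < ω / (ω - 1) := div_pos (one_pos.trans hω1) (sub_pos.2 hω1)
  constructor
  · have hclose := ((herror.trans_tendsto hgap_pow.inv_tendsto_atTop).norm).eventually_lt_const
      (norm_zero.trans_lt one_half_pos)
    have hbound := eventually_abs_lt_rpow_neg (σ := ω - 1 - ε) (τ := ω - 1 - ε / 2)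
      hf_pow (by simpa only [Nat.cast_pow] using herror)
      (eventually_pow_rpow_le_pow_gap hb hgap (by linarith)) (by linarith)
    filter_upwards [hclose, hbound] with n hclose_n hbound_n
    rw [Nat.cast_pow] at hclose_n
    have hexp : -ω + 1 + ε = -(ω - 1 - ε) := by ring
    exact ⟨distNearestInt_eq_abs_sub hclose_n, hexp ▸ hbound_n⟩
  · have hdep := eventually_exists_mul_sub_mul_eq_zero
      (s := ω / (ω - 1) + ε / 2) (t := ω / (ω - 1) + ε) hgap_pow herror
      (by simpa only [Nat.cast_pow] using
        eventually_pow_succ_le_pow_gap_rpow hb hef hω1 hgap hequiv (by linarith))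
      (by linarith) (by linarith)
    simpa only [Nat.cast_pow, neg_add', ← neg_div] using hdep

/-- Block-lacunary numbers `ζ = Σ A·b^{-aₙ}`: estimates for `‖ζ·b^{fₙ}‖` and structure of
all very good rational approximations of `ζ`. -/
theorem block_lacunary_approximations (b A : ℕ) (hb : 2 ≤ b) (hA1 : 1 ≤ A) (hAb : A < b)
    (e f : ℕ → ℕ) (he0 : 0 < e 0) (hemono : StrictMono e) (hfmono : StrictMono f)
    (hinter : ∀ n, e n < f n ∧ f n < e (n + 1))
    (ω : ℝ) (hω : ω = Filter.liminf (fun n : ℕ => (e (n + 1) : ℝ) / (f n : ℝ)) atTop)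
    (hω2 : 2 < ω)
    (hO : ∃ C : ℝ, ∀ n : ℕ, ((f n : ℝ) - (e n : ℝ)) ≤ C * ((n : ℝ) + 1))
    (a : ℕ → ℕ) (ha : StrictMono a)
    (haI : ∀ n, ∃ m, e m ≤ a n ∧ a n ≤ f m)
    (φ ψ : ℕ → ℕ) (hφ : StrictMono φ) (hψ : StrictMono ψ)
    (hφe : ∀ n, a (φ n) = e n) (hψf : ∀ n, a (ψ n) = f n)
    (ζ : ℝ) (hζ : ζ = ∑' n : ℕ, (A : ℝ) / (b : ℝ) ^ (a n))
    (y : ℕ → ℤ) (hy : ∀ n, y n = ∑ j ∈ Finset.range (ψ n + 1), (A : ℤ) * (b : ℤ) ^ (f n - a j))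
    (ε : ℝ) (hε : 0 < ε) :
    (∃ N : ℕ, ∀ n : ℕ, N ≤ n →
      distNearestInt (ζ * (b : ℝ) ^ (f n)) = |ζ * (b : ℝ) ^ (f n) - (y n : ℝ)| ∧
      |ζ * (b : ℝ) ^ (f n) - (y n : ℝ)| < ((b : ℝ) ^ (f n)) ^ (-ω + 1 + ε)) ∧
    (∃ X : ℕ, ∀ (x : ℕ) (yy : ℤ), X ≤ x →
      |ζ * (x : ℝ) - (yy : ℝ)| ≤ (x : ℝ) ^ (-ω / (ω - 1) - ε) →
      ∃ n : ℕ, (x : ℤ) * y n - (b : ℤ) ^ (f n) * yy = 0) := by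
  obtain ⟨C, hC⟩ := hO
  have hef : ∀ n, e n ≤ f n ∧ f n < e (n + 1) := fun n ↦ ⟨(hinter n).1.le, (hinter n).2⟩
  have hω1 : 1 < ω := one_lt_two.trans hω2
  obtain ⟨hdist, hdep⟩ := block_lacunary_approximations_general hb (d := fun _ ↦ A)
    (fun _ ↦ (Nat.abs_cast A).le) hef hω hω1 (isEquivalent_endpoints hef (hω ▸ hω1) hC) ha haI hψf
    (by simpa only [Int.cast_natCast] using hζ) hy hε
  obtain ⟨X, hX⟩ := eventually_atTop.1 hdep
  exact ⟨eventually_atTop.1 hdist, X, fun x yy hx ↦ hX x hx yy⟩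
end

section
/- Let b ≥ 3, R ≥ 1 be integers, A ∈ {1, 2, …, b−1}, and let e, f be integers with R < e < f. Let a be a real number with A·b^R·(b^{−e} + b^{−f}) ≥ a/b and A·b^R·(b^{−e} + b^{−f}) < a. Let 𝓗 be the set of all numbers of the form χ_{e+1}·b^{−e−1} + χ_{e+2}·b^{−e−2} + ⋯ + χ_{f−1}·b^{−f+1} with each χ_l ∈ {0, A}. Then there exists κ ∈ 𝓗 such that (1/(b−1))·(b^{f−e+1} − 1)/(b^{f−e+1} + b) ≤ b^R·(κ + A·b^{−e} + A·b^{−f})/a < 1. -/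
open Finset

/-!
Only the constant digit choices are needed. Write `m` and `M` for the scaled values of the
expansions with all free digits equal to `0` and all equal to `A`, and `t` for the lower bound
to be reached. Summing the geometric series gives `M = t * (b * m)`, so `a ≤ b * m` yields
`t ≤ M / a`, and `M` works whenever `M < a`. If `a ≤ M`, then `t * a ≤ t * M = (b * t ^ 2) * m`,
and `m` works because `t ≤ 1 / (b - 1)` and `b ≤ (b - 1) ^ 2` give `b * t ^ 2 ≤ 1`.
-/

section Field

variable {K : Type*} [Field K]

/-- The ratio `(∑ i ≤ n, b ^ i) / (b * (b ^ n + 1))` of the expansion with `n + 1` equal digits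
to `b` times the expansion with only its two end digits, with the geometric sum evaluated. -/
def fullDigitRatio (b : K) (n : ℕ) : K :=
  1 / (b - 1) * ((b ^ (n + 1) - 1) / (b ^ (n + 1) + b))

lemma sub_one_mul_sum_Icc_zpow_neg {b : K} (hb : b ≠ 0) {e f : ℕ} (hef : e < f) :
    (b - 1) * ∑ l ∈ Icc (e + 1) (f - 1), b ^ (-(l : ℤ)) =
      b ^ (-(e : ℤ)) - b * b ^ (-(f : ℤ)) := by
  have hgeom : (∑ l ∈ Ico (e + 1) f, b⁻¹ ^ l) * (b⁻¹ - 1) = b⁻¹ ^ f - b⁻¹ ^ (e + 1) :=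
    geom_sum_Ico_mul b⁻¹ hef
  simp only [Icc_sub_one_right_eq_Ico_of_not_isMin hef.not_isMin, zpow_neg, zpow_natCast, ← inv_pow]
  linear_combination (-b) * hgeom +
    (b⁻¹ ^ e + ∑ l ∈ Ico (e + 1) f, b⁻¹ ^ l) * mul_inv_cancel₀ hb

end Field

section OrderedField

variable {K : Type*} [Field K] [LinearOrder K] [IsStrictOrderedRing K] {b : K}

lemma sum_Icc_zpow_neg_add_ends (hb : 1 < b) {e f : ℕ} (hef : e < f) :
    (∑ l ∈ Icc (e + 1) (f - 1), b ^ (-(l : ℤ))) + b ^ (-(e : ℤ)) + b ^ (-(f : ℤ)) =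
      fullDigitRatio b (f - e) * (b * (b ^ (-(e : ℤ)) + b ^ (-(f : ℤ)))) := by
  have hb0 : 0 < b := one_pos.trans hb
  have hb1 : b - 1 ≠ 0 := (sub_pos.mpr hb).ne'
  have hden : b ^ (f - e + 1) + b ≠ 0 := by positivity
  have hshift : b ^ (-(e : ℤ)) = b ^ (f - e) * b ^ (-(f : ℤ)) := by
    rw [← zpow_natCast, ← zpow_add₀ hb0.ne', Nat.cast_sub hef.le]
    congr 1
    ring
  have hgeom := sub_one_mul_sum_Icc_zpow_neg hb0.ne' hef
  rw [hshift] at hgeom ⊢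
  unfold fullDigitRatio
  field_simp
  rw [pow_succ]
  linear_combination (b ^ (f - e) * b + b) * hgeom

lemma pow_sub_one_div_pow_add_nonneg (hb : 1 ≤ b) (n : ℕ) :
    0 ≤ (b ^ n - 1) / (b ^ n + b) := by
  have : 0 < b := one_pos.trans_le hb
  exact div_nonneg (sub_nonneg.mpr (one_le_pow₀ hb)) (by positivity)

lemma fullDigitRatio_nonneg (hb : 1 ≤ b) (n : ℕ) : 0 ≤ fullDigitRatio b n :=
  mul_nonneg (one_div_nonneg.mpr (sub_nonneg.mpr hb)) (pow_sub_one_div_pow_add_nonneg hb _)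

lemma mul_fullDigitRatio_sq_le_one (hb : 1 < b) (hb_sq : b ≤ (b - 1) ^ 2) (n : ℕ) :
    b * fullDigitRatio b n ^ 2 ≤ 1 := by
  have : 0 < b := one_pos.trans hb
  have hle_one : (b ^ (n + 1) - 1) / (b ^ (n + 1) + b) ≤ 1 :=
    div_le_one_of_le₀ (by linarith) (by positivity)
  calc b * fullDigitRatio b n ^ 2
      = b / (b - 1) ^ 2 * ((b ^ (n + 1) - 1) / (b ^ (n + 1) + b)) ^ 2 := by
        rw [fullDigitRatio, mul_pow, one_div_pow, ← mul_assoc, mul_one_div]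
    _ ≤ 1 * 1 := mul_le_mul (div_le_one_of_le₀ hb_sq (sq_nonneg _))
        (pow_le_one₀ (pow_sub_one_div_pow_add_nonneg hb.le _) hle_one) (sq_nonneg _) zero_le_one
    _ = 1 := one_mul 1

lemma le_div_lt_one_or_le_div_lt_one {t m M a : K} (hb : 1 < b) (ht : 0 ≤ t)
    (hbt : b * t ^ 2 ≤ 1) (hM : M = t * (b * m)) (hma : m < a) (ham : a ≤ b * m) :
    (t ≤ m / a ∧ m / a < 1) ∨ (t ≤ M / a ∧ M / a < 1) := by
  have hm : 0 < m := by
    have : 0 < (b - 1) * m := by linarith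
    exact pos_of_mul_pos_right this (sub_pos.mpr hb).le
  have ha : 0 < a := hm.trans hma
  simp only [le_div_iff₀ ha, div_lt_one ha]
  rcases lt_or_ge M a with hMa | haM
  · exact .inr ⟨hM ▸ mul_le_mul_of_nonneg_left ham ht, hMa⟩
  · refine .inl ⟨?_, hma⟩
    calc t * a ≤ t * M := mul_le_mul_of_nonneg_left haM ht
      _ = b * t ^ 2 * m := by rw [hM]; ring
      _ ≤ m := mul_le_of_le_one_left hm.le hbt

theorem digit_selection_general (hb : 1 < b) (hb_sq : b ≤ (b - 1) ^ 2) {A c a : K} {e f : ℕ}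
    (hef : e < f) (h1 : a / b ≤ A * c * (b ^ (-(e : ℤ)) + b ^ (-(f : ℤ))))
    (h2 : A * c * (b ^ (-(e : ℤ)) + b ^ (-(f : ℤ))) < a) :
    ∃ d : K, (d = 0 ∨ d = A) ∧
      fullDigitRatio b (f - e) ≤
        c * ((∑ l ∈ Icc (e + 1) (f - 1), d * b ^ (-(l : ℤ))) +
          A * b ^ (-(e : ℤ)) + A * b ^ (-(f : ℤ))) / a ∧
      c * ((∑ l ∈ Icc (e + 1) (f - 1), d * b ^ (-(l : ℤ))) +
          A * b ^ (-(e : ℤ)) + A * b ^ (-(f : ℤ))) / a < 1 := by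
  have hb0 : 0 < b := one_pos.trans hb
  have hzero : c * ((∑ l ∈ Icc (e + 1) (f - 1), 0 * b ^ (-(l : ℤ))) +
      A * b ^ (-(e : ℤ)) + A * b ^ (-(f : ℤ))) =
        A * c * (b ^ (-(e : ℤ)) + b ^ (-(f : ℤ))) := by
    simp only [zero_mul, sum_const_zero]
    ring
  have hfull : c * ((∑ l ∈ Icc (e + 1) (f - 1), A * b ^ (-(l : ℤ))) +
      A * b ^ (-(e : ℤ)) + A * b ^ (-(f : ℤ))) =
        fullDigitRatio b (f - e) *
          (b * (A * c * (b ^ (-(e : ℤ)) + b ^ (-(f : ℤ))))) := by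
    rw [← mul_sum]
    linear_combination (c * A) * sum_Icc_zpow_neg_add_ends hb hef
  rcases le_div_lt_one_or_le_div_lt_one hb (fullDigitRatio_nonneg hb.le _)
    (mul_fullDigitRatio_sq_le_one hb hb_sq _) hfull h2 ((div_le_iff₀' hb0).mp h1)
    with hbounds | hbounds
  · exact ⟨0, .inl rfl, by rwa [hzero]⟩
  · exact ⟨A, .inr rfl, hbounds⟩

end OrderedField

/-- Digit-selection proposition: for `b ≥ 3`, `R ≥ 1`, a digit `A ∈ {1,…,b-1}`, integers
`R < e < f`, and a real `a` with `a/b ≤ A·b^R·(b^{-e} + b^{-f}) < a`, there is a choice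
of digits `χ_l ∈ {0, A}` (for `e+1 ≤ l ≤ f-1`) such that, with
`κ = Σ_{l=e+1}^{f-1} χ_l·b^{-l}`,
`(1/(b-1))·(b^{f-e+1}-1)/(b^{f-e+1}+b) ≤ b^R·(κ + A·b^{-e} + A·b^{-f})/a < 1`. -/
theorem digit_selection (b R A : ℕ) (hb : 3 ≤ b) (hR : 1 ≤ R) (hA1 : 1 ≤ A) (hAb : A < b)
    (e f : ℕ) (hRe : R < e) (hef : e < f) (a : ℝ)
    (h1 : a / (b : ℝ) ≤ (A : ℝ) * (b : ℝ) ^ R * ((b : ℝ) ^ (-(e : ℤ)) + (b : ℝ) ^ (-(f : ℤ))))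
    (h2 : (A : ℝ) * (b : ℝ) ^ R * ((b : ℝ) ^ (-(e : ℤ)) + (b : ℝ) ^ (-(f : ℤ))) < a) :
    ∃ χ : ℕ → ℕ, (∀ l, χ l = 0 ∨ χ l = A) ∧
      1 / ((b : ℝ) - 1) * (((b : ℝ) ^ (f - e + 1) - 1) / ((b : ℝ) ^ (f - e + 1) + (b : ℝ))) ≤
        (b : ℝ) ^ R * ((∑ l ∈ Finset.Icc (e + 1) (f - 1), (χ l : ℝ) * (b : ℝ) ^ (-(l : ℤ))) +
          (A : ℝ) * (b : ℝ) ^ (-(e : ℤ)) + (A : ℝ) * (b : ℝ) ^ (-(f : ℤ))) / a ∧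
      (b : ℝ) ^ R * ((∑ l ∈ Finset.Icc (e + 1) (f - 1), (χ l : ℝ) * (b : ℝ) ^ (-(l : ℤ))) +
          (A : ℝ) * (b : ℝ) ^ (-(e : ℤ)) + (A : ℝ) * (b : ℝ) ^ (-(f : ℤ))) / a < 1 := by
  have hb' : (3 : ℝ) ≤ b := by exact_mod_cast hb
  obtain ⟨d, rfl | rfl, hd⟩ :=
    digit_selection_general (b := (b : ℝ)) (by linarith) (by nlinarith) hef h1 h2
  · exact ⟨0, fun _ => .inl rfl, by simpa [fullDigitRatio] using hd⟩
  · exact ⟨fun _ => A, fun _ => .inr rfl, hd⟩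
end
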